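/- For every α ∈ (0,1] and λ₀ > 0, the Mittag-Leffler density is normalized: ∫_0^∞ λ₀ x^{α−1} E_{α,α}(−λ₀ x^α) dx = 1. -/

import Mathlib

open MeasureTheory

/-- Two-parameter Mittag-Leffler function `E_{a,b}(z) = Σ_{m=0}^∞ z^m / Γ(a m + b)`. -/
noncomputable def mittagLeffler (a b z : ℝ) : ℝ :=
  ∑' m : ℕ, z ^ m / Real.Gamma (a * m + b)

/-!
Let `k x = l * x ^ (α - 1) / Γ(α)`. Fractional integration of the Mittag-Leffler series, term by
term through the beta integral, shows that the density `r` is the resolvent of `k`: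
`r + r * k = k` for the convolution on `(0, x)`.

For `α ≤ 1` the kernel `k` is log-convex, and this makes its resolvent positive. If `r` had a first
zero `x₀`, let `x` be the maximum point of `r` on a short interval ending at `x₀`. Log-convexity
gives `k (x₀ - y) / k (x - y) ≤ k x₀ / k x` for `y < x`, so that scaling the equation at `x` by
`k x₀ / k x` and subtracting the one at `x₀` bounds `r x * (k x₀ / k x)` by the integral of
`r y * k (x₀ - y)` over `(x, x₀)`. That integral is at most `r x` times the integral of `k`
over `(0, x₀ - x)`, hence smaller than `r x * (k x₀ / k x)` once the interval is short enough.

Hence `0 < r ≤ k`, so the Laplace transform of `r` exists on `(0, ∞)` and equals `K / (1 + K)`,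
where `K s = l * s ^ (-α)` is that of `k`. Since `K s → ∞` as `s → 0⁺`, the integral of `r` is `1`
by monotone convergence.
-/

section VolterraResolvent

open Real Set Filter Topology

/-- The Laplace transform of (the restriction to `(0, ∞)` of) a real function. -/
noncomputable def laplaceTransform (f : ℝ → ℝ) (s : ℝ) : ℝ :=
  ∫ x in Ioi (0 : ℝ), exp (-(s * x)) * f x

theorem laplaceTransform_convolution {f g : ℝ → ℝ} {s : ℝ}
    (hf : IntegrableOn (fun x ↦ exp (-(s * x)) * f x) (Ioi 0))
    (hg : IntegrableOn (fun x ↦ exp (-(s * x)) * g x) (Ioi 0)) :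
    laplaceTransform (fun x ↦ ∫ y in 0..x, f y * g (x - y)) s =
      laplaceTransform f s * laplaceTransform g s := by
  have hmul := integral_posConvolution hf hg (ContinuousLinearMap.mul ℝ ℝ)
  simp only [ContinuousLinearMap.mul_apply'] at hmul
  rw [laplaceTransform, laplaceTransform, laplaceTransform, ← hmul]
  refine setIntegral_congr_fun measurableSet_Ioi fun x _ ↦ ?_
  simp only [← intervalIntegral.integral_const_mul]
  refine intervalIntegral.integral_congr fun y _ ↦ ?_
  have hexp : exp (-(s * x)) = exp (-(s * y)) * exp (-(s * (x - y))) := by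
    rw [← exp_add]; ring_nf
  simp only [hexp]
  ring

theorem intervalIntegrable_of_integrableOn_exp_neg_mul {f : ℝ → ℝ} {s b : ℝ} (hb : 0 ≤ b)
    (hf : IntegrableOn (fun x ↦ exp (-(s * x)) * f x) (Ioi 0)) :
    IntervalIntegrable f volume 0 b := by
  have hexp_mul := ((intervalIntegrable_iff_integrableOn_Ioc_of_le hb).2
    (hf.mono_set Ioc_subset_Ioi_self)).continuousOn_mul
      (g := fun x ↦ exp (s * x)) (by fun_prop)
  refine hexp_mul.congr fun x _ ↦ ?_
  simp [← mul_assoc, ← exp_add]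

theorem integral_eq_of_tendsto_laplaceTransform {f : ℝ → ℝ} {L : ℝ} (hf : ∀ x > 0, 0 ≤ f x)
    (hint : ∀ s > 0, IntegrableOn (fun x ↦ exp (-(s * x)) * f x) (Ioi 0))
    (hL : Tendsto (laplaceTransform f) (𝓝[>] 0) (𝓝 L)) :
    ∫ x in Ioi (0 : ℝ), f x = L := by
  obtain ⟨s, hs_anti, hs_pos, hs_lim⟩ := exists_seq_strictAnti_tendsto (0 : ℝ)
  have hG_nonneg (n : ℕ) : ∀ᵐ x ∂volume.restrict (Ioi 0), 0 ≤ exp (-(s n * x)) * f x :=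
    ae_restrict_of_forall_mem measurableSet_Ioi fun x hx ↦ mul_nonneg (exp_pos _).le (hf x hx)
  have hG_lim : ∀ x, Tendsto (fun n ↦ exp (-(s n * x)) * f x) atTop (𝓝 (f x)) := fun x ↦ by
    have : Continuous fun t : ℝ ↦ exp (-(t * x)) * f x := by fun_prop
    simpa [Function.comp_def] using (this.tendsto 0).comp hs_lim
  have hlim : Tendsto (fun n ↦ ∫⁻ x in Ioi 0, ENNReal.ofReal (exp (-(s n * x)) * f x)) atTop
      (𝓝 (∫⁻ x in Ioi 0, ENNReal.ofReal (f x))) := by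
    refine lintegral_tendsto_of_tendsto_of_monotone
      (fun n ↦ (hint _ (hs_pos n)).aemeasurable.ennreal_ofReal) ?_
      (.of_forall fun x ↦ ENNReal.tendsto_ofReal (hG_lim x))
    refine ae_restrict_of_forall_mem measurableSet_Ioi fun x hx m n hmn ↦ ?_
    have hx' : 0 < x := hx
    have hf' := hf x hx
    have := hs_anti.antitone hmn
    dsimp only
    gcongr
  have hlim' : Tendsto (fun n ↦ laplaceTransform f (s n)) atTop (𝓝 L) :=
    hL.comp (tendsto_nhdsWithin_iff.2 ⟨hs_lim, .of_forall hs_pos⟩)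
  have hL_nonneg : 0 ≤ L := ge_of_tendsto' hlim' fun n ↦ integral_nonneg_of_ae (hG_nonneg n)
  have hlintegral : ∫⁻ x in Ioi 0, ENNReal.ofReal (f x) = ENNReal.ofReal L := by
    refine tendsto_nhds_unique hlim ((ENNReal.tendsto_ofReal hlim').congr fun n ↦ ?_)
    exact ofReal_integral_eq_lintegral_ofReal (hint _ (hs_pos n)) (hG_nonneg n)
  have hmeas : AEStronglyMeasurable f (volume.restrict (Ioi 0)) :=
    aestronglyMeasurable_of_tendsto_ae atTop (fun n ↦ (hint _ (hs_pos n)).aestronglyMeasurable)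
      (.of_forall hG_lim)
  rw [integral_eq_lintegral_of_nonneg_ae (ae_restrict_of_forall_mem measurableSet_Ioi hf) hmeas,
    hlintegral, ENNReal.toReal_ofReal hL_nonneg]

theorem convexOn_map_add_add_map_le {s : Set ℝ} {f : ℝ → ℝ} (hf : ConvexOn ℝ s f) {u x h : ℝ}
    (hu : u ∈ s) (hxh : x + h ∈ s) (hux : u ≤ x) (hh : 0 ≤ h) :
    f (u + h) + f x ≤ f u + f (x + h) := by
  rcases (add_nonneg (sub_nonneg.2 hux) hh).eq_or_lt with h0 | hpos
  · obtain rfl : u = x := by linarith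
    exact (add_comm _ _).le
  set t := h / (x - u + h)
  have ht0 : 0 ≤ t := by positivity
  have ht1 : 0 ≤ 1 - t := sub_nonneg.2 ((div_le_one hpos).2 (by linarith))
  have hleft := hf.2 hu hxh ht1 ht0 (by ring)
  have hright := hf.2 hu hxh ht0 ht1 (by ring)
  have hth : t * (x - u + h) = h := div_mul_cancel₀ _ hpos.ne'
  simp only [smul_eq_mul] at hleft hright
  rw [show (1 - t) * u + t * (x + h) = u + h by linear_combination hth] at hleft
  rw [show t * u + (1 - t) * (x + h) = x by linear_combination -hth] at hright
  linarith

theorem mul_le_mul_of_convexOn_log {k : ℝ → ℝ} (hk_pos : ∀ x > 0, 0 < k x)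
    (hk_log : ConvexOn ℝ (Ioi 0) fun x ↦ log (k x)) {u x h : ℝ} (hu : 0 < u) (hux : u ≤ x)
    (hh : 0 ≤ h) : k (u + h) * k x ≤ k u * k (x + h) := by
  have hx := hu.trans_le hux
  have hku := hk_pos u hu
  have hkx := hk_pos x hx
  have hkuh := hk_pos (u + h) (by positivity)
  have hkxh := hk_pos (x + h) (by positivity)
  rw [← log_le_log_iff (by positivity) (by positivity), log_mul hkuh.ne' hkx.ne',
    log_mul hku.ne' hkxh.ne']
  exact convexOn_map_add_add_map_le hk_log hu (add_pos_of_pos_of_nonneg hx hh) hux hh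

theorem continuousOn_of_convexOn_log {k : ℝ → ℝ} (hk_pos : ∀ x > 0, 0 < k x)
    (hk_log : ConvexOn ℝ (Ioi 0) fun x ↦ log (k x)) : ContinuousOn k (Ioi 0) :=
  (hk_log.continuousOn isOpen_Ioi).rexp.congr fun x hx ↦ (exp_log (hk_pos x hx)).symm

/-- `r` is the resolvent of the kernel `k` on `(0, ∞)`: it solves the Volterra equation
`r + r * k = k`, where `*` is convolution over `(0, x)`. Integrability is part of the notion, so
that the convolution is never a junk value. -/
structure IsVolterraResolvent (k r : ℝ → ℝ) : Prop where
  intervalIntegrable : ∀ x > 0, IntervalIntegrable (fun y ↦ r y * k (x - y)) volume 0 x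
  add_integral_eq : ∀ x > 0, r x + ∫ y in 0..x, r y * k (x - y) = k x

theorem exists_first_nonpos {r : ℝ → ℝ} (hr : ContinuousOn r (Ioi 0))
    (hr_pos : ∀ᶠ x in 𝓝[>] 0, 0 < r x) (hneg : ∃ x > 0, r x ≤ 0) :
    ∃ x₀ > 0, r x₀ ≤ 0 ∧ ∀ x ∈ Ioo 0 x₀, 0 < r x := by
  obtain ⟨x₁, hx₁, hrx₁⟩ := hneg
  obtain ⟨ε, hε, hrε⟩ := (mem_nhdsGT_iff_exists_Ioo_subset).1 hr_pos
  have hε' : 0 < ε := hε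
  have hclosed : IsClosed (Ici ε ∩ {x | r x ≤ 0}) :=
    (hr.mono fun x hx ↦ hε'.trans_le hx).preimage_isClosed_of_isClosed isClosed_Ici isClosed_Iic
  have hle {x : ℝ} (hx : 0 < x) (hrx : r x ≤ 0) : ε ≤ x :=
    not_lt.1 fun hxε ↦ hrx.not_gt (hrε ⟨hx, hxε⟩)
  have hbdd : BddBelow (Ici ε ∩ {x | r x ≤ 0}) := ⟨ε, fun x hx ↦ hx.1⟩
  have hmem := hclosed.csInf_mem ⟨x₁, hle hx₁ hrx₁, hrx₁⟩ hbdd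
  refine ⟨_, hε'.trans_le hmem.1, hmem.2, fun x hx ↦ not_le.1 fun hrx ↦ ?_⟩
  exact (csInf_le hbdd ⟨hle hx.1 hrx, hrx⟩).not_gt hx.2

theorem tendsto_intervalIntegral_nhdsGT_zero {k : ℝ → ℝ} {b : ℝ} (hb : 0 < b)
    (hk : IntervalIntegrable k volume 0 b) :
    Tendsto (fun δ ↦ ∫ y in 0..δ, k y) (𝓝[>] 0) (𝓝 0) := by
  have hcont := intervalIntegral.continuousOn_primitive_interval' hk left_mem_uIcc
  rw [uIcc_of_le hb.le] at hcont
  have hlim := (hcont 0 (left_mem_Icc.2 hb.le)).tendsto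
  rw [intervalIntegral.integral_same] at hlim
  exact hlim.mono_left (nhdsWithin_le_of_mem (Icc_mem_nhdsGT hb))

theorem eventually_mul_intervalIntegral_lt {k : ℝ → ℝ} {b x₀ : ℝ} (hb : 0 < b)
    (hk_int : IntervalIntegrable k volume 0 b) (hk_cont : ContinuousAt k x₀) (hkx₀ : 0 < k x₀) :
    ∀ᶠ x in 𝓝[<] x₀, k x * ∫ y in 0..(x₀ - x), k y < k x₀ := by
  have hsub : Tendsto (fun x ↦ x₀ - x) (𝓝[<] x₀) (𝓝[>] 0) := by
    refine tendsto_nhdsWithin_iff.2 ⟨?_, ?_⟩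
    · have : ContinuousAt (fun x ↦ x₀ - x) x₀ := by fun_prop
      simpa using this.tendsto.mono_left nhdsWithin_le_nhds
    · filter_upwards [self_mem_nhdsWithin] with x hx using sub_pos.2 (mem_Iio.1 hx)
  have hlim := (hk_cont.tendsto.mono_left nhdsWithin_le_nhds).mul
    ((tendsto_intervalIntegral_nhdsGT_zero hb hk_int).comp hsub)
  rw [mul_zero] at hlim
  exact hlim.eventually_lt_const hkx₀

namespace IsVolterraResolvent

variable {k r : ℝ → ℝ}

theorem mul_le_integral (hr : IsVolterraResolvent k r) (hk_pos : ∀ x > 0, 0 < k x)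
    (hk_log : ConvexOn ℝ (Ioi 0) fun x ↦ log (k x)) {x x₀ : ℝ} (hx : x ∈ Ioo 0 x₀)
    (hr_nonneg : ∀ y ∈ Ioo 0 x, 0 ≤ r y) (hrx₀ : r x₀ ≤ 0) :
    k x₀ * r x ≤ k x * ∫ y in x..x₀, r y * k (x₀ - y) := by
  have hx₀ : 0 < x₀ := hx.1.trans hx.2
  have hint : IntervalIntegrable (fun y ↦ r y * k (x₀ - y)) volume 0 x₀ :=
    hr.intervalIntegrable x₀ hx₀
  have hint_left : IntervalIntegrable (fun y ↦ r y * k (x₀ - y)) volume 0 x :=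
    hint.mono_set (uIcc_subset_uIcc_left (by rw [uIcc_of_le hx₀.le]; exact ⟨hx.1.le, hx.2.le⟩))
  have hint_right : IntervalIntegrable (fun y ↦ r y * k (x₀ - y)) volume x x₀ :=
    hint.mono_set (uIcc_subset_uIcc_right (by rw [uIcc_of_le hx₀.le]; exact ⟨hx.1.le, hx.2.le⟩))
  have hcompare : (∫ y in 0..x, r y * k (x₀ - y)) * k x ≤ k x₀ * ∫ y in 0..x, r y * k (x - y) := by
    rw [← intervalIntegral.integral_mul_const, ← intervalIntegral.integral_const_mul]
    refine intervalIntegral.integral_mono_on_of_le_Ioo hx.1.le (hint_left.mul_const _)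
      ((hr.intervalIntegrable x hx.1).const_mul _) fun y hy ↦ ?_
    have hratio := mul_le_mul_of_convexOn_log hk_pos hk_log (sub_pos.2 hy.2)
      (sub_le_self x hy.1.le) (sub_nonneg.2 hx.2.le)
    rw [show x - y + (x₀ - x) = x₀ - y by ring, add_sub_cancel] at hratio
    linarith [mul_le_mul_of_nonneg_left hratio (hr_nonneg y hy)]
  have hx_eq := hr.add_integral_eq x hx.1
  have hx₀_eq := hr.add_integral_eq x₀ hx₀
  rw [← intervalIntegral.integral_add_adjacent_intervals hint_left hint_right] at hx₀_eq
  have hdrop : k x * r x₀ ≤ 0 := mul_nonpos_of_nonneg_of_nonpos (hk_pos x hx.1).le hrx₀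
  linear_combination hcompare + hdrop + k x₀ * hx_eq - k x * hx₀_eq

theorem integral_le_of_le (hr : IsVolterraResolvent k r) (hk_pos : ∀ x > 0, 0 < k x)
    {x x₀ C : ℝ} (hk_int : IntervalIntegrable k volume 0 (x₀ - x)) (hx : x ∈ Ioo 0 x₀)
    (hC : ∀ y ∈ Ioo x x₀, r y ≤ C) :
    ∫ y in x..x₀, r y * k (x₀ - y) ≤ C * ∫ y in 0..(x₀ - x), k y := by
  have hx₀ : 0 < x₀ := hx.1.trans hx.2
  have hshift : ∫ y in x..x₀, k (x₀ - y) = ∫ y in 0..(x₀ - x), k y := by simp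
  rw [← hshift, ← intervalIntegral.integral_const_mul]
  refine intervalIntegral.integral_mono_on_of_le_Ioo hx.2.le
    ((hr.intervalIntegrable x₀ hx₀).mono_set (uIcc_subset_uIcc_right
      (by rw [uIcc_of_le hx₀.le]; exact ⟨hx.1.le, hx.2.le⟩))) ?_ fun y hy ↦ ?_
  · simpa using ((hk_int.comp_sub_left x₀).symm).const_mul C
  · exact mul_le_mul_of_nonneg_right (hC y hy) (hk_pos _ (sub_pos.2 hy.2)).le

theorem pos_of_forall_lt_pos (hr : IsVolterraResolvent k r) (hk_pos : ∀ x > 0, 0 < k x)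
    (hk_log : ConvexOn ℝ (Ioi 0) fun x ↦ log (k x)) (hk_int : IntervalIntegrable k volume 0 1)
    (hr_cont : ContinuousOn r (Ioi 0)) {x₀ : ℝ} (hx₀ : 0 < x₀)
    (hr_lt : ∀ x ∈ Ioo 0 x₀, 0 < r x) : 0 < r x₀ := by
  by_contra! hrx₀
  have hk_cont := (continuousOn_of_convexOn_log hk_pos hk_log).continuousAt (Ioi_mem_nhds hx₀)
  obtain ⟨a, hax₀, ha⟩ := mem_nhdsLT_iff_exists_Ico_subset.1 <|
    (eventually_mul_intervalIntegral_lt zero_lt_one hk_int hk_cont (hk_pos x₀ hx₀)).and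
      (Ioo_mem_nhdsLT (max_lt hx₀ (sub_one_lt x₀)))
  have ha_pos : 0 < a := (le_max_left _ _).trans_lt (ha ⟨le_rfl, hax₀⟩).2.1
  obtain ⟨x, hx, hx_max⟩ := isCompact_Icc.exists_isMaxOn (nonempty_Icc.2 hax₀.le)
    (hr_cont.mono fun y hy ↦ ha_pos.trans_le hy.1)
  have hrx : 0 < r x := (hr_lt a ⟨ha_pos, hax₀⟩).trans_le (hx_max (left_mem_Icc.2 hax₀.le))
  have hxx₀ : x < x₀ := hx.2.lt_of_ne fun h ↦ hrx₀.not_gt (h ▸ hrx)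
  have hx_mem : x ∈ Ioo 0 x₀ := ⟨ha_pos.trans_le hx.1, hxx₀⟩
  obtain ⟨hint_lt, hx_gt, -⟩ := ha ⟨hx.1, hxx₀⟩
  have hx_sub : x₀ - x ≤ 1 := by linarith [le_max_right 0 (x₀ - 1)]
  have hk_int_sub : IntervalIntegrable k volume 0 (x₀ - x) :=
    hk_int.mono_set (uIcc_subset_uIcc_left (by
      rw [uIcc_of_le zero_le_one]
      exact ⟨(sub_pos.2 hxx₀).le, hx_sub⟩))
  have hupper := hr.integral_le_of_le hk_pos hk_int_sub hx_mem
    fun y hy ↦ hx_max ⟨hx.1.trans hy.1.le, hy.2.le⟩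
  have hkx := hk_pos x hx_mem.1
  refine lt_irrefl (k x₀ * r x) ?_
  calc k x₀ * r x ≤ k x * ∫ y in x..x₀, r y * k (x₀ - y) :=
        hr.mul_le_integral hk_pos hk_log hx_mem
          (fun y hy ↦ (hr_lt y ⟨hy.1, hy.2.trans hxx₀⟩).le) hrx₀
    _ ≤ k x * (r x * ∫ y in 0..(x₀ - x), k y) := by gcongr
    _ = (k x * ∫ y in 0..(x₀ - x), k y) * r x := by ring
    _ < k x₀ * r x := by gcongr

theorem pos (hr : IsVolterraResolvent k r) (hk_pos : ∀ x > 0, 0 < k x)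
    (hk_log : ConvexOn ℝ (Ioi 0) fun x ↦ log (k x)) (hk_int : IntervalIntegrable k volume 0 1)
    (hr_cont : ContinuousOn r (Ioi 0)) (hr_pos : ∀ᶠ x in 𝓝[>] 0, 0 < r x) :
    ∀ x > 0, 0 < r x := by
  by_contra! hneg
  obtain ⟨x₀, hx₀, hrx₀, hr_lt⟩ := exists_first_nonpos hr_cont hr_pos hneg
  exact hrx₀.not_gt (hr.pos_of_forall_lt_pos hk_pos hk_log hk_int hr_cont hx₀ hr_lt)

theorem laplaceTransform_eq (hr : IsVolterraResolvent k r) {s : ℝ}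
    (hk_int : IntegrableOn (fun x ↦ exp (-(s * x)) * k x) (Ioi 0))
    (hr_int : IntegrableOn (fun x ↦ exp (-(s * x)) * r x) (Ioi 0))
    (hs : 1 + laplaceTransform k s ≠ 0) :
    laplaceTransform r s = laplaceTransform k s / (1 + laplaceTransform k s) := by
  have hconv : laplaceTransform r s * laplaceTransform k s =
      laplaceTransform k s - laplaceTransform r s := by
    rw [← laplaceTransform_convolution hr_int hk_int, laplaceTransform, laplaceTransform,
      laplaceTransform, ← integral_sub hk_int hr_int]
    refine setIntegral_congr_fun measurableSet_Ioi fun x hx ↦ ?_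
    simp only [← hr.add_integral_eq x hx]
    ring
  rw [eq_div_iff hs]
  linarith

theorem le_kernel (hr : IsVolterraResolvent k r) (hk_pos : ∀ x > 0, 0 < k x)
    (hr_nonneg : ∀ x > 0, 0 ≤ r x) {x : ℝ} (hx : 0 < x) : r x ≤ k x := by
  have hconv : 0 ≤ ∫ y in 0..x, r y * k (x - y) := by
    rw [intervalIntegral.integral_of_le hx.le, integral_Ioc_eq_integral_Ioo]
    exact setIntegral_nonneg measurableSet_Ioo fun y hy ↦
      mul_nonneg (hr_nonneg y hy.1) (hk_pos _ (sub_pos.2 hy.2)).le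
  linarith [hr.add_integral_eq x hx]

theorem integral_eq_one (hr : IsVolterraResolvent k r) (hk_pos : ∀ x > 0, 0 < k x)
    (hk_log : ConvexOn ℝ (Ioi 0) fun x ↦ log (k x))
    (hk_int : ∀ s > 0, IntegrableOn (fun x ↦ exp (-(s * x)) * k x) (Ioi 0))
    (hk_top : Tendsto (laplaceTransform k) (𝓝[>] 0) atTop)
    (hr_cont : ContinuousOn r (Ioi 0)) (hr_pos : ∀ᶠ x in 𝓝[>] 0, 0 < r x) :
    ∫ x in Ioi (0 : ℝ), r x = 1 := by
  have hk_int_one : IntervalIntegrable k volume 0 1 :=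
    intervalIntegrable_of_integrableOn_exp_neg_mul zero_le_one (hk_int 1 one_pos)
  have hr_pos' := hr.pos hk_pos hk_log hk_int_one hr_cont hr_pos
  have hr_int : ∀ s > 0, IntegrableOn (fun x ↦ exp (-(s * x)) * r x) (Ioi 0) := fun s hs ↦ by
    refine (hk_int s hs).mono' ?_ (ae_restrict_of_forall_mem measurableSet_Ioi fun x hx ↦ ?_)
    · have hcont : ContinuousOn (fun x ↦ exp (-(s * x)) * r x) (Ioi 0) := by fun_prop
      exact hcont.aestronglyMeasurable measurableSet_Ioi
    · have hrx := hr_pos' x hx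
      rw [norm_of_nonneg (by positivity)]
      gcongr
      exact hr.le_kernel hk_pos (fun y hy ↦ (hr_pos' y hy).le) hx
  refine integral_eq_of_tendsto_laplaceTransform (fun x hx ↦ (hr_pos' x hx).le) hr_int ?_
  have hlim : Tendsto (fun K : ℝ ↦ K / (1 + K)) atTop (𝓝 1) := by
    have h0 : Tendsto (fun K : ℝ ↦ 1 - (1 + K)⁻¹) atTop (𝓝 (1 - 0)) :=
      (tendsto_inv_atTop_zero.comp (tendsto_atTop_add_const_left _ 1 tendsto_id)).const_sub 1
    rw [sub_zero] at h0
    refine h0.congr' ?_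
    filter_upwards [eventually_gt_atTop 0] with K hK
    field_simp
    ring
  refine (hlim.comp hk_top).congr' ?_
  filter_upwards [self_mem_nhdsWithin, hk_top.eventually_gt_atTop 0] with s hs hKs
  exact (hr.laplaceTransform_eq (hk_int s hs) (hr_int s hs) (by positivity)).symm

end IsVolterraResolvent

end VolterraResolvent

section MittagLeffler

open Real Set Filter Topology

theorem rpow_mul_exp_neg_le_Gamma {a R : ℝ} (ha : 1 ≤ a) (hR : 0 ≤ R) :
    R ^ (a - 1) * exp (-R) ≤ Gamma a := by
  have hconv : IntegrableOn (fun x ↦ exp (-x) * x ^ (a - 1)) (Ioi 0) :=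
    GammaIntegral_convergent (by linarith)
  rw [Gamma_eq_integral (by linarith), ← integral_exp_neg_Ioi, ← integral_const_mul]
  calc ∫ x in Ioi R, R ^ (a - 1) * exp (-x)
      ≤ ∫ x in Ioi R, exp (-x) * x ^ (a - 1) := by
        refine setIntegral_mono_on ((integrableOn_exp_neg_Ioi R).const_mul _)
          (hconv.mono_set (Ioi_subset_Ioi hR)) measurableSet_Ioi fun x hx ↦ ?_
        rw [mul_comm]
        gcongr
        exact (mem_Ioi.1 hx).le
    _ ≤ ∫ x in Ioi (0 : ℝ), exp (-x) * x ^ (a - 1) := by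
        refine setIntegral_mono_set hconv ?_ (Ioi_subset_Ioi hR).eventuallyLE
        exact ae_restrict_of_forall_mem measurableSet_Ioi fun x hx ↦
          mul_nonneg (exp_pos _).le (rpow_nonneg (mem_Ioi.1 hx).le _)

theorem summable_pow_div_Gamma {a : ℝ} (ha : 0 < a) (b z : ℝ) :
    Summable fun m : ℕ ↦ z ^ m / Gamma (a * m + b) := by
  set q := 2 * |z| + 1
  have hq_pos : 0 < q := by positivity
  set R := q ^ a⁻¹
  have hR : 0 < R := by positivity
  have hRm (m : ℕ) : R ^ (a * m + b - 1) = q ^ m * R ^ (b - 1) := by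
    rw [add_sub_assoc, rpow_add hR, rpow_mul hR.le, rpow_inv_rpow hq_pos.le ha.ne', rpow_natCast]
  have hgeom : Summable fun m : ℕ ↦ (|z| / q) ^ m * (R ^ (b - 1) * exp (-R))⁻¹ :=
    (summable_geometric_of_lt_one (by positivity)
      ((div_lt_one hq_pos).2 (by linarith [abs_nonneg z]))).mul_right _
  have hlarge : ∀ᶠ m : ℕ in atTop, 1 ≤ a * m + b :=
    (tendsto_atTop_add_const_right _ b
      (tendsto_natCast_atTop_atTop.const_mul_atTop ha)).eventually_ge_atTop 1
  refine hgeom.of_norm_bounded_eventually_nat ?_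
  filter_upwards [hlarge] with m hm
  have hΓ := rpow_mul_exp_neg_le_Gamma hm hR.le
  rw [hRm] at hΓ
  rw [norm_div, norm_pow, norm_eq_abs z, norm_of_nonneg (Gamma_pos_of_pos (by linarith)).le,
    div_pow, ← div_eq_mul_inv, div_div, ← mul_assoc]
  gcongr

theorem continuous_mittagLeffler {a : ℝ} (ha : 0 < a) (b : ℝ) : Continuous (mittagLeffler a b) := by
  refine continuous_iff_continuousAt.2 fun z ↦ ?_
  have hcont : ContinuousOn (mittagLeffler a b) (Icc (-(|z| + 1)) (|z| + 1)) := by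
    refine continuousOn_tsum (fun m ↦ by fun_prop)
      (summable_pow_div_Gamma ha b (|z| + 1)).norm fun m w hw ↦ ?_
    rw [norm_div, norm_div, norm_pow, norm_pow, norm_of_nonneg (by positivity : 0 ≤ |z| + 1)]
    gcongr
    exact abs_le.2 hw
  exact hcont.continuousAt (Icc_mem_nhds (by linarith [neg_abs_le z]) (by linarith [le_abs_self z]))

theorem continuous_mittagLeffler_const_mul_rpow {a : ℝ} (ha : 0 < a) (b c : ℝ) :
    Continuous fun x : ℝ ↦ mittagLeffler a b (c * x ^ a) :=
  (continuous_mittagLeffler ha b).comp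
    ((continuous_id.rpow_const fun _ ↦ .inr ha.le).const_mul c)

theorem mittagLeffler_zero_right (a b : ℝ) : mittagLeffler a b 0 = (Gamma b)⁻¹ := by
  rw [mittagLeffler, tsum_eq_single 0 fun m hm ↦ by simp [hm]]
  simp

theorem mittagLeffler_eq_inv_Gamma_add {a : ℝ} (ha : 0 < a) (b z : ℝ) :
    mittagLeffler a b z = (Gamma b)⁻¹ + z * mittagLeffler a (a + b) z := by
  rw [mittagLeffler, (summable_pow_div_Gamma ha b z).tsum_eq_zero_add, mittagLeffler,
    ← tsum_mul_left]
  simp only [Nat.cast_add, Nat.cast_one, pow_succ']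
  ring_nf

/-- The Riemann-Liouville kernel, convolution with which is fractional integration of order `a`. -/
noncomputable def riemannLiouvilleKernel (a x : ℝ) : ℝ :=
  x ^ (a - 1) / Gamma a

theorem riemannLiouvilleKernel_pos {a x : ℝ} (ha : 0 < a) (hx : 0 < x) :
    0 < riemannLiouvilleKernel a x :=
  div_pos (rpow_pos_of_pos hx _) (Gamma_pos_of_pos ha)

theorem integral_rpow_mul_rpow_sub {a b x : ℝ} (ha : 0 < a) (hb : 0 < b) (hx : 0 < x) :
    ∫ y in 0..x, y ^ (a - 1) * (x - y) ^ (b - 1) =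
      x ^ (a + b - 1) * (Gamma a * Gamma b / Gamma (a + b)) := by
  have hcast : ((∫ y in 0..x, y ^ (a - 1) * (x - y) ^ (b - 1) : ℝ) : ℂ) =
      ∫ y in 0..x, (y : ℂ) ^ ((a : ℂ) - 1) * ((x : ℂ) - y) ^ ((b : ℂ) - 1) := by
    rw [← intervalIntegral.integral_ofReal]
    refine intervalIntegral.integral_congr fun y hy ↦ ?_
    rw [uIcc_of_le hx.le] at hy
    simp [Complex.ofReal_cpow hy.1, Complex.ofReal_cpow (sub_nonneg.2 hy.2)]
  rw [Complex.betaIntegral_scaled _ _ hx, Complex.betaIntegral_eq_Gamma_mul_div _ _ (by simpa)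
    (by simpa)] at hcast
  apply Complex.ofReal_injective
  rw [hcast]
  simp [Complex.ofReal_cpow hx.le, ← Complex.Gamma_ofReal]

theorem integral_riemannLiouvilleKernel_mul {a b x : ℝ} (ha : 0 < a) (hb : 0 < b) (hx : 0 < x) :
    ∫ y in 0..x, riemannLiouvilleKernel a y * riemannLiouvilleKernel b (x - y) =
      riemannLiouvilleKernel (a + b) x := by
  have hΓa := (Gamma_pos_of_pos ha).ne'
  have hΓb := (Gamma_pos_of_pos hb).ne'
  simp only [riemannLiouvilleKernel, div_mul_div_comm, intervalIntegral.integral_div]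
  rw [integral_rpow_mul_rpow_sub ha hb hx]
  field_simp

theorem intervalIntegrable_riemannLiouvilleKernel_mul {a b x : ℝ} (ha : 0 < a) (hb : 0 < b)
    (hx : 0 < x) : IntervalIntegrable
      (fun y ↦ riemannLiouvilleKernel a y * riemannLiouvilleKernel b (x - y)) volume 0 x := by
  refine intervalIntegral.intervalIntegrable_of_integral_ne_zero ?_
  rw [integral_riemannLiouvilleKernel_mul ha hb hx]
  exact (riemannLiouvilleKernel_pos (add_pos ha hb) hx).ne'

theorem convexOn_log_const_mul_riemannLiouvilleKernel {a l : ℝ} (ha : a ∈ Ioc 0 1) (hl : 0 < l) :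
    ConvexOn ℝ (Ioi 0) fun x ↦ log (l * riemannLiouvilleKernel a x) := by
  have hconv : ConvexOn ℝ (Ioi 0) fun x ↦ (1 - a) * -log x + (log l - log (Gamma a)) :=
    (strictConcaveOn_log_Ioi.concaveOn.neg.smul (sub_nonneg.2 ha.2)).add_const _
  refine hconv.congr fun x hx ↦ ?_
  have hx' : 0 < x := hx
  rw [log_mul hl.ne' (riemannLiouvilleKernel_pos ha.1 hx').ne', riemannLiouvilleKernel,
    log_div (rpow_pos_of_pos hx' _).ne' (Gamma_pos_of_pos ha.1).ne', log_rpow hx']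
  ring

theorem laplaceTransform_riemannLiouvilleKernel {a s : ℝ} (ha : 0 < a) (hs : 0 < s) :
    laplaceTransform (riemannLiouvilleKernel a) s = (s ^ a)⁻¹ := by
  have hΓ := (Gamma_pos_of_pos ha).ne'
  have hcomm : ∀ x, exp (-(s * x)) * riemannLiouvilleKernel a x =
      x ^ (a - 1) * exp (-(s * x)) / Gamma a := fun x ↦ by rw [riemannLiouvilleKernel]; ring
  simp only [laplaceTransform, hcomm, integral_div, integral_rpow_mul_exp_neg_mul_Ioi ha hs]
  rw [mul_div_cancel_right₀ _ hΓ, one_div, inv_rpow hs.le]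

theorem integrableOn_exp_neg_mul_riemannLiouvilleKernel {a s : ℝ} (ha : 0 < a) (hs : 0 < s) :
    IntegrableOn (fun x ↦ exp (-(s * x)) * riemannLiouvilleKernel a x) (Ioi 0) := by
  refine .of_integral_ne_zero ?_
  rw [← laplaceTransform, laplaceTransform_riemannLiouvilleKernel ha hs]
  positivity

theorem hasSum_rpow_mul_mittagLeffler {a x : ℝ} (ha : 0 < a) (b c : ℝ) (hx : 0 < x) :
    HasSum (fun m : ℕ ↦ c ^ m * riemannLiouvilleKernel (a * m + b) x)
      (x ^ (b - 1) * mittagLeffler a b (c * x ^ a)) := by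
  refine ((summable_pow_div_Gamma ha b (c * x ^ a)).hasSum.mul_left (x ^ (b - 1))).congr_fun ?_
  intro m
  rw [riemannLiouvilleKernel, add_sub_assoc, rpow_add hx, rpow_mul hx.le, rpow_natCast, mul_pow]
  ring

theorem integral_rpow_mul_mittagLeffler_mul {a b d x : ℝ} (ha : 0 < a) (hb : 0 < b) (hd : 0 < d)
    (c : ℝ) (hx : 0 < x) :
    ∫ y in 0..x, y ^ (b - 1) * mittagLeffler a b (c * y ^ a) * riemannLiouvilleKernel d (x - y) =
      x ^ (b + d - 1) * mittagLeffler a (b + d) (c * x ^ a) := by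
  let F (c : ℝ) (m : ℕ) (y : ℝ) : ℝ :=
    c ^ m * (riemannLiouvilleKernel (a * m + b) y * riemannLiouvilleKernel d (x - y))
  have hF_integral (c : ℝ) (m : ℕ) :
      ∫ y in Ioo 0 x, F c m y = c ^ m * riemannLiouvilleKernel (a * m + (b + d)) x := by
    rw [integral_const_mul, ← integral_Ioc_eq_integral_Ioo, ← intervalIntegral.integral_of_le hx.le,
      integral_riemannLiouvilleKernel_mul (by positivity) hd hx, add_assoc]
  have hF_int (m : ℕ) : IntegrableOn (F c m) (Ioo 0 x) :=
    ((intervalIntegrable_iff_integrableOn_Ioo_of_le hx.le).1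
      (intervalIntegrable_riemannLiouvilleKernel_mul (by positivity) hd hx)).const_mul _
  have hF_norm (m : ℕ) : ∫ y in Ioo 0 x, ‖F c m y‖ = ∫ y in Ioo 0 x, F |c| m y := by
    refine setIntegral_congr_fun measurableSet_Ioo fun y hy ↦ ?_
    have hb_pos := riemannLiouvilleKernel_pos (show 0 < a * m + b by positivity) hy.1
    have hd_pos := riemannLiouvilleKernel_pos hd (sub_pos.2 hy.2)
    simp only [F]
    rw [norm_mul, norm_pow, norm_eq_abs c, norm_of_nonneg (by positivity)]
  have hF_sum (y : ℝ) (hy : y ∈ Ioo 0 x) : ∑' m, F c m y =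
      y ^ (b - 1) * mittagLeffler a b (c * y ^ a) * riemannLiouvilleKernel d (x - y) := by
    simp only [F, ← mul_assoc]
    exact ((hasSum_rpow_mul_mittagLeffler ha b c hy.1).mul_right _).tsum_eq
  have hsum : HasSum (fun m ↦ ∫ y in Ioo 0 x, F c m y) (∫ y in Ioo 0 x, ∑' m, F c m y) := by
    refine hasSum_integral_of_summable_integral_norm hF_int ?_
    simp only [hF_norm, hF_integral]
    exact (hasSum_rpow_mul_mittagLeffler ha (b + d) |c| hx).summable
  rw [intervalIntegral.integral_of_le hx.le, integral_Ioc_eq_integral_Ioo,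
    ← setIntegral_congr_fun measurableSet_Ioo hF_sum]
  simp only [hF_integral] at hsum
  exact hsum.unique (hasSum_rpow_mul_mittagLeffler ha (b + d) c hx)

theorem intervalIntegrable_rpow_mul_mittagLeffler_mul {a b d x : ℝ} (ha : 0 < a) (hb : 0 < b)
    (hd : 0 < d) (c : ℝ) (hx : 0 < x) : IntervalIntegrable (fun y ↦
      y ^ (b - 1) * mittagLeffler a b (c * y ^ a) * riemannLiouvilleKernel d (x - y))
      volume 0 x := by
  have hΓ := (Gamma_pos_of_pos hb).ne'
  have hcont : Continuous fun y : ℝ ↦ Gamma b * mittagLeffler a b (c * y ^ a) :=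
    (continuous_mittagLeffler_const_mul_rpow ha b c).const_mul _
  refine ((intervalIntegrable_riemannLiouvilleKernel_mul hb hd hx).continuousOn_mul
    hcont.continuousOn).congr fun y _ ↦ ?_
  simp only [riemannLiouvilleKernel]
  field_simp

/-- The Mittag-Leffler density with index `α` and rate `l`. -/
noncomputable def mittagLefflerDensity (α l x : ℝ) : ℝ :=
  l * x ^ (α - 1) * mittagLeffler α α (-(l * x ^ α))

theorem continuousOn_mittagLefflerDensity {α : ℝ} (hα : 0 < α) (l : ℝ) :
    ContinuousOn (mittagLefflerDensity α l) (Ioi 0) := by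
  have hE : Continuous fun x : ℝ ↦ mittagLeffler α α (-(l * x ^ α)) := by
    simpa only [neg_mul] using continuous_mittagLeffler_const_mul_rpow hα α (-l)
  have hpow : ContinuousOn (fun x : ℝ ↦ x ^ (α - 1)) (Ioi 0) :=
    continuousOn_id.rpow_const fun x hx ↦ .inl (ne_of_gt hx)
  exact (hpow.const_mul l).mul hE.continuousOn

theorem eventually_mittagLefflerDensity_pos {α l : ℝ} (hα : 0 < α) (hl : 0 < l) :
    ∀ᶠ x in 𝓝[>] 0, 0 < mittagLefflerDensity α l x := by
  have hE : Continuous fun x : ℝ ↦ mittagLeffler α α (-(l * x ^ α)) := by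
    simpa only [neg_mul] using continuous_mittagLeffler_const_mul_rpow hα α (-l)
  have hE_zero : 0 < mittagLeffler α α (-(l * 0 ^ α)) := by
    rw [zero_rpow hα.ne', mul_zero, neg_zero, mittagLeffler_zero_right]
    exact inv_pos.2 (Gamma_pos_of_pos hα)
  have hE_pos := (hE.tendsto 0).eventually_const_lt hE_zero
  filter_upwards [self_mem_nhdsWithin, hE_pos.filter_mono nhdsWithin_le_nhds] with x hx hEx
  exact mul_pos (mul_pos hl (rpow_pos_of_pos hx _)) hEx

theorem isVolterraResolvent_mittagLefflerDensity {α : ℝ} (hα : 0 < α) (l : ℝ) :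
    IsVolterraResolvent (fun x ↦ l * riemannLiouvilleKernel α x) (mittagLefflerDensity α l) := by
  have hfactor (x y : ℝ) : mittagLefflerDensity α l y * (l * riemannLiouvilleKernel α (x - y)) =
      l ^ 2 *
        (y ^ (α - 1) * mittagLeffler α α (-l * y ^ α) * riemannLiouvilleKernel α (x - y)) := by
    rw [mittagLefflerDensity, neg_mul]
    ring
  constructor
  · intro x hx
    simp only [hfactor]
    exact (intervalIntegrable_rpow_mul_mittagLeffler_mul hα hα hα (-l) hx).const_mul _
  · intro x hx
    simp only [hfactor, intervalIntegral.integral_const_mul]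
    rw [integral_rpow_mul_mittagLeffler_mul hα hα hα (-l) hx, neg_mul, mittagLefflerDensity,
      mittagLeffler_eq_inv_Gamma_add hα, riemannLiouvilleKernel, add_sub_assoc, rpow_add hx]
    ring

theorem tendsto_laplaceTransform_const_mul_riemannLiouvilleKernel {a l : ℝ} (ha : 0 < a)
    (hl : 0 < l) :
    Tendsto (laplaceTransform fun x ↦ l * riemannLiouvilleKernel a x) (𝓝[>] 0) atTop := by
  have hpow : Tendsto (fun s : ℝ ↦ s ^ a) (𝓝[>] 0) (𝓝[>] 0) := by
    refine tendsto_nhdsWithin_iff.2 ⟨?_, ?_⟩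
    · have := (continuousAt_rpow_const 0 a (.inr ha.le)).tendsto
      rw [zero_rpow ha.ne'] at this
      exact this.mono_left nhdsWithin_le_nhds
    · filter_upwards [self_mem_nhdsWithin] with s hs using rpow_pos_of_pos hs a
  refine ((tendsto_inv_nhdsGT_zero.comp hpow).const_mul_atTop hl).congr' ?_
  filter_upwards [self_mem_nhdsWithin] with s hs
  rw [Function.comp_apply, ← laplaceTransform_riemannLiouvilleKernel ha hs, laplaceTransform,
    laplaceTransform, ← integral_const_mul]
  simp only [mul_left_comm]

end MittagLeffler

/-- For `α ∈ (0,1]`, `λ₀ > 0`, the Mittag-Leffler density is normalized on `(0,∞)`: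
`∫_0^∞ λ₀ x^{α−1} E_{α,α}(−λ₀ x^α) dx = 1`. -/
theorem mittagLeffler_density_normalized (α lam₀ : ℝ)
    (hα : α ∈ Set.Ioc (0 : ℝ) 1) (hlam : 0 < lam₀) :
    (∫ x in Set.Ioi (0 : ℝ), lam₀ * x ^ (α - 1) * mittagLeffler α α (-(lam₀ * x ^ α))) = 1 := by
  refine (isVolterraResolvent_mittagLefflerDensity hα.1 lam₀).integral_eq_one
    (fun x hx ↦ mul_pos hlam (riemannLiouvilleKernel_pos hα.1 hx))
    (convexOn_log_const_mul_riemannLiouvilleKernel hα hlam) (fun s hs ↦ ?_)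
    (tendsto_laplaceTransform_const_mul_riemannLiouvilleKernel hα.1 hlam)
    (continuousOn_mittagLefflerDensity hα.1 lam₀) (eventually_mittagLefflerDensity_pos hα.1 hlam)
  simp only [mul_left_comm _ lam₀]
  exact (integrableOn_exp_neg_mul_riemannLiouvilleKernel hα.1 hs).const_mul lam₀
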